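/- arXiv:2208.02109 — 2 statements merged into one kernel-verified Lean document; each statement's English description precedes it below -/
import Mathlib

section
/- Let d ≥ 2 be an integer with d ≡ 2 (mod 4), and let u ∈ U_d. Then p_{d/2}(u⁻¹) = −p_{d/2}(u). Consequently, if p_{d/2}(u) ≠ 0, then u and u⁻¹ lie in different connected components of the set {v ∈ U_d : p_{d/2}(v) ≠ 0}; in particular, if u ∈ S_d, then u⁻¹ does not lie in the connected component of S_d containing u. -/
/-- `u` is upper triangular with all diagonal entries equal to `1`. -/
def IsUniUpper (d : ℕ) (u : Matrix (Fin d) (Fin d) ℝ) : Prop :=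
  (∀ i j : Fin d, (j : ℕ) < (i : ℕ) → u i j = 0) ∧ (∀ i : Fin d, u i i = 1)

/-- `p_k(u)`: the determinant of the upper-right `k × k` block of `u`
(rows `1,…,k` and columns `d−k+1,…,d`, in one-based indexing). -/
noncomputable def cornerMinor (d k : ℕ) (u : Matrix (Fin d) (Fin d) ℝ) : ℝ :=
  Matrix.det (Matrix.of fun i j : Fin k =>
    if h : (i : ℕ) < d ∧ d - k + (j : ℕ) < d then u ⟨i, h.1⟩ ⟨d - k + j, h.2⟩ else 0)

/-- `S_d = {u ∈ U_d : p_k(u) ≠ 0 for all 1 ≤ k ≤ d−1}`. -/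
def Sset (d : ℕ) : Set (Matrix (Fin d) (Fin d) ℝ) :=
  {u | IsUniUpper d u ∧ ∀ k : ℕ, 1 ≤ k → k ≤ d - 1 → cornerMinor d k u ≠ 0}

/-!
Write `u` and `u⁻¹` as `2 × 2` arrays of square blocks. Replacing the first block column of the
identity by the second block column of `u⁻¹`, multiplying by `u` and taking determinants expresses
the upper-right minor of `u⁻¹` through that of `u`; in odd block size and determinant one, only a
sign remains. The minor is a continuous function without zeros on the sets in question, so it has
constant sign on each of their components and separates `u` from `u⁻¹`.
-/

section BlockMatrix

open Matrix

variable {m R : Type*} [Fintype m] [DecidableEq m] [CommRing R]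

theorem det_fromBlocks_zero₁₁_one₂₁ (B D : Matrix m m R) :
    (fromBlocks 0 B 1 D).det = (-1) ^ Fintype.card m * B.det := by
  have hrow : fromBlocks 1 1 0 1 * fromBlocks (0 : Matrix m m R) B 1 D =
      fromBlocks 1 (B + D) 1 D := by
    simp only [fromBlocks_multiply, Matrix.one_mul, Matrix.zero_mul, zero_add]
  calc (fromBlocks 0 B 1 D).det
      = (fromBlocks 1 (B + D) 1 D).det := by
        rw [← hrow, det_mul, det_fromBlocks_zero₂₁, det_one, one_mul, one_mul]
    _ = (-B).det := by
        rw [det_fromBlocks_one₁₁, Matrix.one_mul, sub_add_cancel_right]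
    _ = (-1) ^ Fintype.card m * B.det := det_neg B

theorem det_fromBlocks_mul_det {A B C D Q S : Matrix m m R} (h₁₂ : A * Q + B * S = 0)
    (h₂₂ : C * Q + D * S = 1) :
    (fromBlocks A B C D).det * Q.det = (-1) ^ Fintype.card m * B.det := by
  have hmul : fromBlocks A B C D * fromBlocks Q 0 S 1 = fromBlocks 0 B 1 D := by
    simp only [fromBlocks_multiply, h₁₂, h₂₂, Matrix.mul_zero, Matrix.mul_one, zero_add]
  calc (fromBlocks A B C D).det * Q.det
      = (fromBlocks A B C D * fromBlocks Q 0 S 1).det := by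
        rw [det_mul, det_fromBlocks_zero₁₂, det_one, mul_one]
    _ = (-1) ^ Fintype.card m * B.det := by rw [hmul, det_fromBlocks_zero₁₁_one₂₁]

theorem det_mul_det_toBlocks₁₂_of_mul_eq_one {U V : Matrix (m ⊕ m) (m ⊕ m) R}
    (hUV : U * V = 1) :
    U.det * V.toBlocks₁₂.det = (-1) ^ Fintype.card m * U.toBlocks₁₂.det := by
  rw [← U.fromBlocks_toBlocks, ← V.fromBlocks_toBlocks, fromBlocks_multiply, ← fromBlocks_one,
    fromBlocks_inj] at hUV
  obtain ⟨-, h₁₂, -, h₂₂⟩ := hUV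
  rw [← det_fromBlocks_mul_det h₁₂ h₂₂, U.fromBlocks_toBlocks]

end BlockMatrix

theorem sign_eq_of_mem_connectedComponentIn {X α : Type*} [TopologicalSpace X] [Zero α]
    [LinearOrder α] [TopologicalSpace α] [OrderTopology α] {f : X → α} {F : Set X} {x y : X}
    (hf : ContinuousOn f F) (hF : ∀ z ∈ F, f z ≠ 0) (hy : y ∈ connectedComponentIn F x) :
    SignType.sign (f y) = SignType.sign (f x) := by
  have hx : x ∈ F := connectedComponentIn_nonempty_iff.1 ⟨y, hy⟩
  have hsign : ContinuousOn (fun z => SignType.sign (f z)) F := fun z hz =>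
    (continuousAt_sign_of_ne_zero (hF z hz)).comp_continuousWithinAt (hf z hz)
  exact isPreconnected_connectedComponentIn.constant
    (hsign.mono (connectedComponentIn_subset F x)) hy (mem_connectedComponentIn hx)

theorem notMem_connectedComponentIn_of_apply_eq_neg {X α : Type*} [TopologicalSpace X]
    [AddGroup α] [LinearOrder α] [AddLeftStrictMono α] [TopologicalSpace α] [OrderTopology α]
    {f : X → α} {F : Set X} {x y : X} (hf : ContinuousOn f F) (hF : ∀ z ∈ F, f z ≠ 0)
    (hxy : f y = -f x) : y ∉ connectedComponentIn F x := by
  intro hy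
  have hx : x ∈ F := connectedComponentIn_nonempty_iff.1 ⟨y, hy⟩
  have hsign : -SignType.sign (f x) = SignType.sign (f x) := by
    rw [← Left.sign_neg, ← hxy, sign_eq_of_mem_connectedComponentIn hf hF hy]
  exact hF x hx (sign_eq_zero_iff.1 (SignType.neg_eq_self_iff.1 hsign))

theorem IsUniUpper.det_eq_one {d : ℕ} {u : Matrix (Fin d) (Fin d) ℝ} (hu : IsUniUpper d u) :
    u.det = 1 := by
  rw [Matrix.det_of_isUpperTriangular fun i j hij => hu.1 i j hij]
  exact Finset.prod_eq_one fun i _ => hu.2 i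

theorem continuous_cornerMinor (d k : ℕ) : Continuous (cornerMinor d k) := by
  refine Continuous.matrix_det (continuous_matrix fun i j => ?_)
  simp only [Matrix.of_apply]
  split_ifs
  · exact continuous_id.matrix_elem _ _
  · exact continuous_const

theorem cornerMinor_add_self (k : ℕ) (u : Matrix (Fin (k + k)) (Fin (k + k)) ℝ) :
    cornerMinor (k + k) k u = (u.submatrix finSumFinEquiv finSumFinEquiv).toBlocks₁₂.det := by
  refine congrArg Matrix.det (Matrix.ext fun i j => ?_)
  have hij : (i : ℕ) < k + k ∧ k + k - k + (j : ℕ) < k + k := by omega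
  rw [Matrix.of_apply, dif_pos hij]
  refine congrArg (u _) (Fin.ext ?_)
  simp only [finSumFinEquiv_apply_right, Fin.val_natAdd, Nat.add_sub_cancel]

theorem det_mul_cornerMinor_inv (k : ℕ) {u : Matrix (Fin (k + k)) (Fin (k + k)) ℝ}
    (hu : IsUnit u.det) :
    u.det * cornerMinor (k + k) k u⁻¹ = (-1) ^ k * cornerMinor (k + k) k u := by
  have hmul : u.submatrix finSumFinEquiv finSumFinEquiv *
      u⁻¹.submatrix finSumFinEquiv finSumFinEquiv = 1 := by
    rw [Matrix.submatrix_mul_equiv, Matrix.mul_nonsing_inv u hu, Matrix.submatrix_one_equiv]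
  simpa only [cornerMinor_add_self, Matrix.det_submatrix_equiv_self, Fintype.card_fin]
    using det_mul_det_toBlocks₁₂_of_mul_eq_one hmul

theorem cornerMinor_half_inv {d : ℕ} (h4 : d % 4 = 2) {u : Matrix (Fin d) (Fin d) ℝ}
    (hu : u.det = 1) : cornerMinor d (d / 2) u⁻¹ = -cornerMinor d (d / 2) u := by
  obtain ⟨k, rfl⟩ : ∃ k, d = k + k := ⟨d / 2, by omega⟩
  have hhalf : (k + k) / 2 = k := by omega
  have hodd : Odd k := Nat.odd_iff.2 (by omega)
  have hinv := det_mul_cornerMinor_inv k (hu ▸ isUnit_one)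
  rw [hhalf]
  rwa [hu, one_mul, hodd.neg_one_pow, neg_one_mul] at hinv

theorem middle_minor_antisymmetric_general {d : ℕ} (h4 : d % 4 = 2)
    {u : Matrix (Fin d) (Fin d) ℝ} (hu : u.det = 1) :
    cornerMinor d (d / 2) u⁻¹ = -cornerMinor d (d / 2) u ∧
    ∀ F : Set (Matrix (Fin d) (Fin d) ℝ), (∀ v ∈ F, cornerMinor d (d / 2) v ≠ 0) →
      u⁻¹ ∉ connectedComponentIn F u := by
  have hneg := cornerMinor_half_inv h4 hu
  exact ⟨hneg, fun _ hF => notMem_connectedComponentIn_of_apply_eq_neg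
    (continuous_cornerMinor d (d / 2)).continuousOn hF hneg⟩

theorem middle_minor_antisymmetric (d : ℕ) (hd : 2 ≤ d) (h4 : d % 4 = 2)
    (u : Matrix (Fin d) (Fin d) ℝ) (hu : IsUniUpper d u) :
    cornerMinor d (d / 2) u⁻¹ = - cornerMinor d (d / 2) u ∧
    (cornerMinor d (d / 2) u ≠ 0 →
      u⁻¹ ∉ connectedComponentIn {v | IsUniUpper d v ∧ cornerMinor d (d / 2) v ≠ 0} u) ∧
    (u ∈ Sset d → u⁻¹ ∉ connectedComponentIn (Sset d) u) := by
  obtain ⟨hneg, hcomp⟩ := middle_minor_antisymmetric_general h4 hu.det_eq_one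
  exact ⟨hneg, fun _ => hcomp _ fun _ hv => hv.2,
    fun _ => hcomp _ fun _ hv => hv.2 _ (by omega) (by omega)⟩
end

section
/- Let n ≥ 6 be an even integer with n ≡ 2 or 4 (mod 8). Then for every M ∈ T^n, the matrix ι(M) does not belong to the 𝔊_n-orbit of M; that is, no orbit of the 𝔊_n-action on T^n is left invariant by the involution ι. -/
/-- `M ∈ T^n`: all entries strictly below the diagonal vanish. -/
def UpperTri (n : ℕ) (M : Matrix (Fin n) (Fin n) (ZMod 2)) : Prop :=
  ∀ i j : Fin n, (j : ℕ) < (i : ℕ) → M i j = 0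

/-- The involution `ι : T^n → T^n`, `ι(M)_{ij} = M_{(n+1−j)(n+1−i)} + 1` for `i ≤ j`
(one-based indexing; entries below the diagonal remain `0`). -/
def iotaT (n : ℕ) (M : Matrix (Fin n) (Fin n) (ZMod 2)) : Matrix (Fin n) (Fin n) (ZMod 2) :=
  Matrix.of fun i j => if (i : ℕ) ≤ (j : ℕ) then M (Fin.rev j) (Fin.rev i) + 1 else 0

/-- The height pairing `⟨M, R_k⟩ = ∑_{1 ≤ r ≤ k ≤ s ≤ n} M_{rs}`. -/
def heightPair (n : ℕ) (M : Matrix (Fin n) (Fin n) (ZMod 2)) (k : Fin n) : ZMod 2 :=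
  ∑ r : Fin n, ∑ s : Fin n, if r ≤ k ∧ k ≤ s then M r s else 0

/-- Safe entry lookup (zero outside range), with zero-based natural-number indices. -/
def ent (n : ℕ) (M : Matrix (Fin n) (Fin n) (ZMod 2)) (r s : ℕ) : ZMod 2 :=
  if h : r < n ∧ s < n then M ⟨r, h.1⟩ ⟨s, h.2⟩ else 0

/-- The generator `g_{ij}` of `𝔊_n` (here `i ≤ j` are zero-based, corresponding to the
one-based indices `i+1 ≤ j+1`): it adds the trace `M_{ij} + M_{i+1,j+1}` of the `2×2`
submatrix with rows `i, i+1` and columns `j, j+1` to each entry of that submatrix lying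
in the upper triangle. -/
def gmove (n i j : ℕ) (M : Matrix (Fin n) (Fin n) (ZMod 2)) :
    Matrix (Fin n) (Fin n) (ZMod 2) :=
  Matrix.of fun r s =>
    if ((r : ℕ) = i ∨ (r : ℕ) = i + 1) ∧ ((s : ℕ) = j ∨ (s : ℕ) = j + 1)
        ∧ (r : ℕ) ≤ (s : ℕ)
    then M r s + (ent n M i j + ent n M (i + 1) (j + 1))
    else M r s

/-- One application of a generator `g_{ij}`, `1 ≤ i ≤ j ≤ n−1` (one-based);
in zero-based indices `i ≤ j` and `j + 2 ≤ n`. -/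
def Gstep (n : ℕ) (M M' : Matrix (Fin n) (Fin n) (ZMod 2)) : Prop :=
  ∃ i j : ℕ, i ≤ j ∧ j + 2 ≤ n ∧ M' = gmove n i j M

/-- `N` belongs to the `𝔊_n`-orbit of `M`: the reflexive-transitive closure of the
generating moves (each generator is an involution, so this is the orbit equivalence). -/
def InOrbit (n : ℕ) (M N : Matrix (Fin n) (Fin n) (ZMod 2)) : Prop :=
  Relation.ReflTransGen (Gstep n) M N

/-!
Let `Q(M)` be the sum, over all cells `u ≤ s` of the triangle, of the part of column `s` in rows
`r ≤ u` times the part of row `u` in columns `v ≥ s`. This is a quadratic form over `𝔽₂`, and its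
polar form with the upper triangular part `E` of a `2 × 2` block of consecutive rows and columns is
the trace of that block; moreover `Q(E) = 1`. Hence `g_{ij}` is the orthogonal transvection
`M ↦ M + B(M, E) E`, with `B` the polar form of `Q`, and `Q` is constant on orbits. So are the
heights, because those of `E` vanish.

The involution `ι` is the reflection in the antidiagonal, which preserves `Q` and reverses the order
of the heights, followed by adding the all-ones triangle `U`. Therefore `Q(ι M) - Q(M)` is
`Q(U) = (n + 3).choose 4` plus `B(M, U)`, which is `n + 1` times the sum of the heights of `M`. If
`ι M` lies in the orbit of `M`, this second term vanishes: for `n` even the sequence of heights is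
then a palindrome of even length. But `(n + 3).choose 4` is odd for `n % 8 ∈ {1, 2, 3, 4}`.
-/

open Finset QuadraticMap
open scoped Matrix

section CharTwo

variable {R : Type*} [CommRing R] [CharP R 2]

theorem quadraticForm_add_polar_smul_self {V : Type*} [AddCommGroup V] [Module R V]
    (Q : QuadraticForm R V) {v : V} (hv : Q v = 1) (x : V) : Q (x + polar Q x v • v) = Q x := by
  rw [QuadraticMap.map_add Q, QuadraticMap.map_smul, polar_smul_right, hv, smul_eq_mul, smul_eq_mul,
    mul_one, add_assoc, CharTwo.add_self_eq_zero, add_zero]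

theorem sum_eq_zero_of_apply_rev {n : ℕ} (hn : Even n) {f : Fin n → R}
    (hf : ∀ k, f k.rev = f k) : ∑ k, f k = 0 := by
  refine sum_involution (fun k _ => k.rev) (fun k _ => ?_) (fun k _ _ h => ?_)
    (fun k _ => mem_univ _) (fun k _ => Fin.rev_rev k)
  · rw [hf, CharTwo.add_self_eq_zero]
  · have := congrArg Fin.val h
    grind

end CharTwo

section FinSums

variable {n : ℕ} {α : Type*} [AddCommMonoid α]

theorem sum_sum_Ici_comm (f : Fin n → Fin n → α) :
    ∑ u, ∑ s ∈ Ici u, f u s = ∑ s, ∑ u ∈ Iic s, f u s :=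
  sum_comm' (by simp)

theorem sum_sum_Ici_ite_eq {a b : Fin n} (hab : a ≤ b) (f : Fin n → Fin n → α) :
    ∑ u, ∑ s ∈ Ici u, (if s = b ∧ u = a then f u s else 0) = f a b := by
  rw [sum_sum_Ici_comm]
  simp only [ite_and, sum_ite_irrel, sum_const_zero, sum_ite_eq', mem_univ, if_true, mem_Iic, hab]

theorem sum_Ici_sum_Ici_eq_sum_sum_Icc (u : Fin n) (f : Fin n → Fin n → α) :
    ∑ s ∈ Ici u, ∑ v ∈ Ici s, f s v = ∑ v ∈ Ici u, ∑ s ∈ Icc u v, f s v :=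
  sum_comm' fun s v => by simp only [mem_Ici, mem_Icc]; grind

theorem sum_Iic_sum_Iic_eq_sum_sum_Icc (s : Fin n) (f : Fin n → Fin n → α) :
    ∑ u ∈ Iic s, ∑ r ∈ Iic u, f r u = ∑ r ∈ Iic s, ∑ u ∈ Icc r s, f r u :=
  sum_comm' fun u r => by simp only [mem_Iic, mem_Icc]; grind

theorem sum_Iic_comp_rev (s : Fin n) (f : Fin n → α) :
    ∑ r ∈ Iic s, f r.rev = ∑ v ∈ Ici s.rev, f v := by
  rw [← Fin.map_revPerm_Iic, sum_map]
  rfl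

theorem sum_Ici_comp_rev (s : Fin n) (f : Fin n → α) :
    ∑ r ∈ Ici s, f r.rev = ∑ v ∈ Iic s.rev, f v := by
  rw [← Fin.map_revPerm_Ici, sum_map]
  rfl

theorem sum_sum_Ici_comp_rev (f : Fin n → Fin n → α) :
    ∑ u : Fin n, ∑ s ∈ Ici u, f s.rev u.rev = ∑ u, ∑ s ∈ Ici u, f u s := by
  rw [sum_sum_Ici_comm, ← Equiv.sum_comp Fin.revPerm]
  refine sum_congr rfl fun s _ => ?_
  rw [Fin.revPerm_apply, Fin.rev_rev, sum_Iic_comp_rev _ (f s), Fin.rev_rev]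

theorem sum_Iic_add_choose (s : Fin n) (k : ℕ) :
    ∑ u ∈ Iic s, ((u : ℕ) + k).choose k = ((s : ℕ) + k + 1).choose (k + 1) := by
  rw [← Nat.sum_range_add_choose, Nat.range_succ_eq_Iic, ← Fin.map_valEmbedding_Iic, sum_map]
  rfl

theorem sum_sum_Ici_mul (n : ℕ) :
    ∑ u : Fin n, ∑ s ∈ Ici u, ((u : ℕ) + 1) * (n - s) = (n + 3).choose 4 := by
  calc ∑ u : Fin n, ∑ s ∈ Ici u, ((u : ℕ) + 1) * (n - s)
      = ∑ s : Fin n, ∑ u ∈ Iic s, ((u : ℕ) + 1).choose 1 * (n - s) := by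
        simp only [sum_sum_Ici_comm, Nat.choose_one_right]
    _ = ∑ s : Fin n, ∑ v ∈ Ici s, ((s : ℕ) + 2).choose 2 := by
        simp only [← sum_mul, sum_Iic_add_choose, sum_const, Fin.card_Ici, smul_eq_mul,
          mul_comm (n - _)]
    _ = ∑ v : Fin n, ((v : ℕ) + 3).choose 3 := by
        simp only [sum_sum_Ici_comm, sum_Iic_add_choose]
    _ = (n + 3).choose 4 := by
        rw [Fin.sum_univ_eq_sum_range fun v => (v + 3).choose 3]
        cases n with
        | zero => rfl
        | succ n => exact Nat.sum_range_add_choose n 3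

end FinSums

theorem choose_four_mod_two (m : ℕ) : m.choose 4 % 2 = m / 4 % 2 := by
  have lucas (a b : ℕ) :=
    Choose.choose_modEq_choose_mod_mul_choose_div_nat (n := a) (k := b) (p := 2)
  have h : m.choose 4 ≡ m / 4 [MOD 2] := by
    simpa [Nat.div_div_eq_div_mul] using (lucas m 4).trans ((lucas (m / 2) 2).mul_left _)
  exact h

section TransvectionAction

variable {n : ℕ}

/-- The partial column sum of column `s` over the rows `r ≤ u`, as a linear functional. -/
def colSum (u s : Fin n) : Matrix (Fin n) (Fin n) (ZMod 2) →ₗ[ZMod 2] ZMod 2 :=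
  ∑ r ∈ Iic u, Matrix.entryLinearMap (ZMod 2) (ZMod 2) r s

/-- The partial row sum of row `u` over the columns `v ≥ s`, as a linear functional. -/
def rowSum (u s : Fin n) : Matrix (Fin n) (Fin n) (ZMod 2) →ₗ[ZMod 2] ZMod 2 :=
  ∑ v ∈ Ici s, Matrix.entryLinearMap (ZMod 2) (ZMod 2) u v

/-- The quadratic form `Q` that is invariant under the moves. It is defined on all matrices but only
sees the entries on and above the diagonal. -/
def hookForm (n : ℕ) : QuadraticForm (ZMod 2) (Matrix (Fin n) (Fin n) (ZMod 2)) :=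
  ∑ u, ∑ s ∈ Ici u, linMulLin (colSum u s) (rowSum u s)

/-- The part on and above the diagonal of the `2 × 2` block of ones in rows `i, i'` and columns
`j, j'`. With `i ⋖ i'` and `j ⋖ j'` this is the direction in which `g_{ij}` moves a matrix. -/
def upperBlock (i i' j j' : Fin n) : Matrix (Fin n) (Fin n) (ZMod 2) :=
  Matrix.of fun r s => if (r = i ∨ r = i') ∧ (s = j ∨ s = j') ∧ r ≤ s then 1 else 0

/-- The upper triangular matrix `U` with all entries on and above the diagonal equal to `1`, which
is the translation part of the affine map `ι`. -/
def upperOnes (n : ℕ) : Matrix (Fin n) (Fin n) (ZMod 2) :=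
  Matrix.of fun r s => if r ≤ s then 1 else 0

theorem colSum_apply (u s : Fin n) (M : Matrix (Fin n) (Fin n) (ZMod 2)) :
    colSum u s M = ∑ r ∈ Iic u, M r s := by
  simp only [colSum, LinearMap.sum_apply, Matrix.entryLinearMap_apply]

theorem rowSum_apply (u s : Fin n) (M : Matrix (Fin n) (Fin n) (ZMod 2)) :
    rowSum u s M = ∑ v ∈ Ici s, M u v := by
  simp only [rowSum, LinearMap.sum_apply, Matrix.entryLinearMap_apply]

theorem hookForm_apply (M : Matrix (Fin n) (Fin n) (ZMod 2)) :
    hookForm n M = ∑ u, ∑ s ∈ Ici u, colSum u s M * rowSum u s M := by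
  simp only [hookForm, _root_.sum_apply, linMulLin_apply]

theorem polar_hookForm (M N : Matrix (Fin n) (Fin n) (ZMod 2)) :
    polar (hookForm n) M N =
      ∑ u, ∑ s ∈ Ici u, (colSum u s M * rowSum u s N + colSum u s N * rowSum u s M) := by
  simp only [polar, hookForm_apply, map_add, ← sum_sub_distrib]
  refine sum_congr rfl fun u _ => sum_congr rfl fun s _ => ?_
  ring

theorem heightPair_eq_sum_rowSum (M : Matrix (Fin n) (Fin n) (ZMod 2)) (k : Fin n) :
    heightPair n M k = ∑ r ∈ Iic k, rowSum r k M := by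
  simp only [heightPair, rowSum_apply, ite_and, ← mem_Iic (a := k), ← mem_Ici (a := k)]
  simp only [sum_ite_irrel, sum_const_zero, sum_ite_mem, univ_inter]

theorem heightPair_eq_sum_colSum (M : Matrix (Fin n) (Fin n) (ZMod 2)) (k : Fin n) :
    heightPair n M k = ∑ s ∈ Ici k, colSum k s M := by
  simp only [heightPair_eq_sum_rowSum, rowSum_apply, colSum_apply]
  exact sum_comm

theorem heightPair_add_smul (M N : Matrix (Fin n) (Fin n) (ZMod 2)) (t : ZMod 2) (k : Fin n) :
    heightPair n (M + t • N) k = heightPair n M k + t * heightPair n N k := by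
  simp only [heightPair_eq_sum_rowSum, map_add, map_smul, sum_add_distrib, mul_sum, smul_eq_mul]

theorem colSum_add_colSum_of_covBy {i i' : Fin n} (hi : i ⋖ i') (s : Fin n)
    (M : Matrix (Fin n) (Fin n) (ZMod 2)) : colSum i s M + colSum i' s M = M i' s := by
  have hIio : Iio i' = Iic i := by rw [← coe_inj, coe_Iio, coe_Iic, hi.Iio_eq]
  rw [colSum_apply, colSum_apply, ← sum_Iio_add_eq_sum_Iic (f := (M · s)) i', hIio, ← add_assoc,
    CharTwo.add_self_eq_zero, zero_add]

theorem rowSum_add_rowSum_of_covBy {j j' : Fin n} (hj : j ⋖ j') (u : Fin n)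
    (M : Matrix (Fin n) (Fin n) (ZMod 2)) : rowSum u j M + rowSum u j' M = M u j := by
  have hIoi : Ioi j = Ici j' := by rw [← coe_inj, coe_Ioi, coe_Ici, hj.Ioi_eq]
  rw [rowSum_apply, rowSum_apply, ← add_sum_Ioi_eq_sum_Ici (f := M u) j, hIoi, add_assoc,
    CharTwo.add_self_eq_zero, add_zero]

section Block

variable {i i' j j' u s : Fin n}

theorem colSum_upperBlock (hi : i ⋖ i') (hj : j ⋖ j') (hij : i ≤ j) (hus : u ≤ s) :
    colSum u s (upperBlock i i' j j') =
      (if u = i then 1 else 0) * ((if s = j then 1 else 0) + if s = j' then 1 else 0) := by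
  have hblock (r : Fin n) : upperBlock i i' j j' r s =
      (if r = i then (if s = j ∨ s = j' then 1 else 0) else 0) +
        (if r = i' then (if (s = j ∨ s = j') ∧ i' ≤ s then 1 else 0) else 0) := by
    simp only [upperBlock, Matrix.of_apply]
    grind [Fin.covBy_iff, Nat.covBy_iff_add_one_eq]
  simp only [colSum_apply, hblock, sum_add_distrib, sum_ite_eq', mem_Iic]
  grind [Fin.covBy_iff, Nat.covBy_iff_add_one_eq]

theorem rowSum_upperBlock (hi : i ⋖ i') (hj : j ⋖ j') (hij : i ≤ j) (hus : u ≤ s) :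
    rowSum u s (upperBlock i i' j j') =
      ((if u = i then 1 else 0) + if u = i' then 1 else 0) * (if s = j' then 1 else 0) := by
  have hblock (v : Fin n) : upperBlock i i' j j' u v =
      (if v = j then (if (u = i ∨ u = i') ∧ u ≤ j then 1 else 0) else 0) +
        (if v = j' then (if u = i ∨ u = i' then 1 else 0) else 0) := by
    simp only [upperBlock, Matrix.of_apply]
    grind [Fin.covBy_iff, Nat.covBy_iff_add_one_eq]
  simp only [rowSum_apply, hblock, sum_add_distrib, sum_ite_eq', mem_Ici]
  grind [Fin.covBy_iff, Nat.covBy_iff_add_one_eq]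

theorem hookForm_upperBlock (hi : i ⋖ i') (hj : j ⋖ j') (hij : i ≤ j) :
    hookForm n (upperBlock i i' j j') = 1 := by
  have hcorner (u s : Fin n) (hus : u ≤ s) :
      colSum u s (upperBlock i i' j j') * rowSum u s (upperBlock i i' j j') =
        if s = j' ∧ u = i then 1 else 0 := by
    rw [colSum_upperBlock hi hj hij hus, rowSum_upperBlock hi hj hij hus]
    grind [hi.ne, hj.ne]
  rw [hookForm_apply, ← sum_sum_Ici_ite_eq (hij.trans hj.le) fun _ _ => (1 : ZMod 2)]
  exact sum_congr rfl fun u _ => sum_congr rfl fun s hs => hcorner u s (mem_Ici.1 hs)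

theorem polar_hookForm_upperBlock (hi : i ⋖ i') (hj : j ⋖ j') (hij : i ≤ j)
    (M : Matrix (Fin n) (Fin n) (ZMod 2)) :
    polar (hookForm n) M (upperBlock i i' j j') = M i j + M i' j' := by
  have hij' : i ≤ j' := hij.trans hj.le
  have hi'j' : i' ≤ j' := hi.ge_of_gt (hij.trans_lt hj.lt)
  calc polar (hookForm n) M (upperBlock i i' j j')
      = ∑ u, ∑ s ∈ Ici u, (colSum u s M *
            (((if u = i then 1 else 0) + if u = i' then 1 else 0) * if s = j' then 1 else 0) +
          (if u = i then 1 else 0) * ((if s = j then 1 else 0) + if s = j' then 1 else 0) *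
            rowSum u s M) := by
        rw [polar_hookForm]
        refine sum_congr rfl fun u _ => sum_congr rfl fun s hs => ?_
        rw [colSum_upperBlock hi hj hij (mem_Ici.1 hs), rowSum_upperBlock hi hj hij (mem_Ici.1 hs)]
    _ = (colSum i j' M + colSum i' j' M) + (rowSum i j M + rowSum i j' M) := by
        simp only [mul_add, add_mul, mul_assoc, sum_add_distrib]
        simp only [ite_mul, mul_ite, one_mul, mul_one, zero_mul, mul_zero, ← ite_and,
          sum_sum_Ici_ite_eq, hij, hij', hi'j']
    _ = M i j + M i' j' := by
        rw [colSum_add_colSum_of_covBy hi, rowSum_add_rowSum_of_covBy hj, add_comm]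

theorem heightPair_upperBlock (hi : i ⋖ i') (hj : j ⋖ j') (hij : i ≤ j) (k : Fin n) :
    heightPair n (upperBlock i i' j j') k = 0 := by
  have hij' : i ≤ j' := hij.trans hj.le
  have hi'j' : i' ≤ j' := hi.ge_of_gt (hij.trans_lt hj.lt)
  calc heightPair n (upperBlock i i' j j') k
      = ∑ r ∈ Iic k,
          ((if r = i then 1 else 0) + if r = i' then 1 else 0) * if k = j' then 1 else 0 := by
        rw [heightPair_eq_sum_rowSum]
        exact sum_congr rfl fun r hr => rowSum_upperBlock hi hj hij (mem_Iic.1 hr)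
    _ = 0 := by
        rw [← sum_mul]
        rcases eq_or_ne k j' with rfl | hk
        · simp [sum_add_distrib, hij', hi'j', CharTwo.add_self_eq_zero]
        · simp [hk]

end Block

theorem Gstep.exists_eq_add_smul_upperBlock {M N : Matrix (Fin n) (Fin n) (ZMod 2)}
    (h : Gstep n M N) : ∃ i i' j j' : Fin n, i ⋖ i' ∧ j ⋖ j' ∧ i ≤ j ∧
      N = M + (M i j + M i' j') • upperBlock i i' j j' := by
  obtain ⟨i, j, hij, hj, rfl⟩ := h
  refine ⟨⟨i, by omega⟩, ⟨i + 1, by omega⟩, ⟨j, by omega⟩, ⟨j + 1, by omega⟩,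
    Fin.covBy_iff.2 (Order.covBy_add_one i), Fin.covBy_iff.2 (Order.covBy_add_one j), hij, ?_⟩
  ext r s
  have hij_ent : i < n ∧ j < n := by omega
  have hij_ent' : i + 1 < n ∧ j + 1 < n := by omega
  simp only [gmove, ent, upperBlock, Matrix.of_apply, Matrix.add_apply, Matrix.smul_apply,
    smul_eq_mul, dif_pos hij_ent, dif_pos hij_ent', Fin.ext_iff, Fin.le_def, mul_ite, mul_one,
    mul_zero, add_ite, add_zero]

theorem Gstep.hookForm_eq {M N : Matrix (Fin n) (Fin n) (ZMod 2)} (h : Gstep n M N) :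
    hookForm n N = hookForm n M := by
  obtain ⟨i, i', j, j', hi, hj, hij, rfl⟩ := h.exists_eq_add_smul_upperBlock
  rw [← polar_hookForm_upperBlock hi hj hij]
  exact quadraticForm_add_polar_smul_self _ (hookForm_upperBlock hi hj hij) M

theorem Gstep.heightPair_eq {M N : Matrix (Fin n) (Fin n) (ZMod 2)} (h : Gstep n M N)
    (k : Fin n) : heightPair n N k = heightPair n M k := by
  obtain ⟨i, i', j, j', hi, hj, hij, rfl⟩ := h.exists_eq_add_smul_upperBlock
  rw [heightPair_add_smul, heightPair_upperBlock hi hj hij, mul_zero, add_zero]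

theorem InOrbit.apply_eq {α : Type*} {f : Matrix (Fin n) (Fin n) (ZMod 2) → α}
    (hf : ∀ {M N}, Gstep n M N → f N = f M) {M N : Matrix (Fin n) (Fin n) (ZMod 2)}
    (h : InOrbit n M N) : f N = f M := by
  induction h with
  | refl => rfl
  | tail _ hstep ih => exact (hf hstep).trans ih

theorem iotaT_eq_add_upperOnes {M : Matrix (Fin n) (Fin n) (ZMod 2)} (hM : UpperTri n M) :
    iotaT n M = Mᵀ.submatrix Fin.rev Fin.rev + upperOnes n := by
  ext r s
  simp only [iotaT, upperOnes, Matrix.of_apply, Matrix.add_apply, Matrix.submatrix_apply,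
    Matrix.transpose_apply, Fin.le_def]
  split_ifs with hrs
  · rfl
  · rw [hM _ _ (by simp only [Fin.val_rev]; omega), add_zero]

theorem colSum_transpose_submatrix_rev (u s : Fin n) (M : Matrix (Fin n) (Fin n) (ZMod 2)) :
    colSum u s (Mᵀ.submatrix Fin.rev Fin.rev) = rowSum s.rev u.rev M := by
  rw [colSum_apply, rowSum_apply]
  exact sum_Iic_comp_rev u (M s.rev)

theorem rowSum_transpose_submatrix_rev (u s : Fin n) (M : Matrix (Fin n) (Fin n) (ZMod 2)) :
    rowSum u s (Mᵀ.submatrix Fin.rev Fin.rev) = colSum s.rev u.rev M := by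
  rw [colSum_apply, rowSum_apply]
  exact sum_Ici_comp_rev s (M · u.rev)

theorem hookForm_transpose_submatrix_rev (M : Matrix (Fin n) (Fin n) (ZMod 2)) :
    hookForm n (Mᵀ.submatrix Fin.rev Fin.rev) = hookForm n M := by
  simp only [hookForm_apply, colSum_transpose_submatrix_rev, rowSum_transpose_submatrix_rev]
  simpa only [mul_comm] using sum_sum_Ici_comp_rev fun u s => colSum u s M * rowSum u s M

theorem heightPair_transpose_submatrix_rev (M : Matrix (Fin n) (Fin n) (ZMod 2)) (k : Fin n) :
    heightPair n (Mᵀ.submatrix Fin.rev Fin.rev) k = heightPair n M k.rev := by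
  rw [heightPair_eq_sum_rowSum, heightPair_eq_sum_colSum]
  simp only [rowSum_transpose_submatrix_rev]
  exact sum_Iic_comp_rev k fun s => colSum k.rev s M

theorem colSum_upperOnes {u s : Fin n} (hus : u ≤ s) :
    colSum u s (upperOnes n) = ((u : ℕ) + 1 : ℕ) := by
  have hone : ∀ r ∈ Iic u, upperOnes n r s = 1 := fun r hr =>
    if_pos ((mem_Iic.1 hr).trans hus)
  rw [colSum_apply, sum_congr rfl hone, sum_const, Fin.card_Iic, nsmul_one]

theorem rowSum_upperOnes {u s : Fin n} (hus : u ≤ s) :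
    rowSum u s (upperOnes n) = (n - s : ℕ) := by
  have hone : ∀ v ∈ Ici s, upperOnes n u v = 1 := fun v hv =>
    if_pos (hus.trans (mem_Ici.1 hv))
  rw [rowSum_apply, sum_congr rfl hone, sum_const, Fin.card_Ici, nsmul_one]

theorem hookForm_upperOnes (n : ℕ) : hookForm n (upperOnes n) = ((n + 3).choose 4 : ℕ) := by
  rw [hookForm_apply, ← sum_sum_Ici_mul]
  push_cast only [Nat.cast_sum, Nat.cast_mul]
  refine sum_congr rfl fun u _ => sum_congr rfl fun s hs => ?_
  rw [colSum_upperOnes (mem_Ici.1 hs), rowSum_upperOnes (mem_Ici.1 hs)]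

theorem heightPair_upperOnes (k : Fin n) :
    heightPair n (upperOnes n) k = ((k + 1) * (n - k) : ℕ) := by
  rw [heightPair_eq_sum_rowSum, sum_congr rfl fun r hr => rowSum_upperOnes (mem_Iic.1 hr),
    sum_const, Fin.card_Iic, nsmul_eq_mul, Nat.cast_mul]

theorem heightPair_upperOnes_of_even (hn : Even n) (k : Fin n) :
    heightPair n (upperOnes n) k = 0 := by
  rw [heightPair_upperOnes, ZMod.natCast_eq_zero_iff_even]
  grind

theorem cast_card_Icc {u v : Fin n} (huv : u ≤ v) :
    (#(Icc u v) : ZMod 2) = (u : ℕ) + (v : ℕ) + 1 := by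
  rw [Fin.card_Icc, Nat.cast_sub (by grind), CharTwo.sub_eq_add]
  push_cast
  ring

theorem sum_sum_mul_rowSum (a : Fin n → ZMod 2) (M : Matrix (Fin n) (Fin n) (ZMod 2)) :
    ∑ u, ∑ s ∈ Ici u, a u * rowSum u s M =
      ∑ u : Fin n, ∑ v ∈ Ici u, a u * (((u : ℕ) + (v : ℕ) + 1) * M u v) := by
  refine sum_congr rfl fun u _ => ?_
  simp only [← mul_sum, rowSum_apply]
  rw [sum_Ici_sum_Ici_eq_sum_sum_Icc]
  congr 1
  refine sum_congr rfl fun v hv => ?_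
  rw [sum_const, nsmul_eq_mul, cast_card_Icc (mem_Ici.1 hv)]

theorem sum_sum_colSum_mul (b : Fin n → ZMod 2) (M : Matrix (Fin n) (Fin n) (ZMod 2)) :
    ∑ u, ∑ s ∈ Ici u, b s * colSum u s M =
      ∑ u : Fin n, ∑ v ∈ Ici u, b v * (((u : ℕ) + (v : ℕ) + 1) * M u v) := by
  simp only [sum_sum_Ici_comm]
  refine sum_congr rfl fun s _ => ?_
  simp only [← mul_sum, colSum_apply]
  rw [sum_Iic_sum_Iic_eq_sum_sum_Icc]
  congr 1
  refine sum_congr rfl fun r hr => ?_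
  rw [sum_const, nsmul_eq_mul, cast_card_Icc (mem_Iic.1 hr)]

theorem sum_heightPair (M : Matrix (Fin n) (Fin n) (ZMod 2)) :
    ∑ k, heightPair n M k = ∑ u : Fin n, ∑ v ∈ Ici u, ((u : ℕ) + (v : ℕ) + 1) * M u v := by
  simpa only [heightPair_eq_sum_colSum, one_mul] using sum_sum_colSum_mul (fun _ => 1) M

theorem polar_hookForm_upperOnes (M : Matrix (Fin n) (Fin n) (ZMod 2)) :
    polar (hookForm n) M (upperOnes n) = (n + 1) * ∑ k, heightPair n M k := by
  have hlength (a b c : ZMod 2) :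
      (c + b) * (a + b + 1) + (a + 1) * (a + b + 1) = (c + 1) * (a + b + 1) := by
    revert a b c; decide
  calc polar (hookForm n) M (upperOnes n)
      = ∑ u : Fin n, ∑ s ∈ Ici u, (n + (s : ℕ) : ZMod 2) * colSum u s M +
          ∑ u : Fin n, ∑ s ∈ Ici u, ((u : ℕ) + 1 : ZMod 2) * rowSum u s M := by
        simp only [polar_hookForm, ← sum_add_distrib]
        refine sum_congr rfl fun u _ => sum_congr rfl fun s hs => ?_
        rw [colSum_upperOnes (mem_Ici.1 hs), rowSum_upperOnes (mem_Ici.1 hs),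
          Nat.cast_sub s.isLt.le, CharTwo.sub_eq_add, Nat.cast_succ, mul_comm (colSum u s M)]
    _ = (n + 1) * ∑ k, heightPair n M k := by
        rw [sum_sum_colSum_mul (fun s => n + (s : ℕ)), sum_sum_mul_rowSum (fun u => (u : ℕ) + 1),
          sum_heightPair]
        simp only [← sum_add_distrib, mul_sum, ← mul_assoc, ← add_mul, hlength]

theorem hookForm_iotaT {M : Matrix (Fin n) (Fin n) (ZMod 2)} (hM : UpperTri n M) :
    hookForm n (iotaT n M) =
      hookForm n M + ((n + 3).choose 4 : ℕ) + (n + 1) * ∑ k, heightPair n M k := by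
  rw [iotaT_eq_add_upperOnes hM, QuadraticMap.map_add (hookForm n),
    hookForm_transpose_submatrix_rev, hookForm_upperOnes, polar_hookForm_upperOnes]
  simp only [heightPair_transpose_submatrix_rev]
  rw [← Equiv.sum_comp Fin.revPerm (heightPair n M)]
  rfl

theorem heightPair_iotaT_of_even (hn : Even n) {M : Matrix (Fin n) (Fin n) (ZMod 2)}
    (hM : UpperTri n M) (k : Fin n) : heightPair n (iotaT n M) k = heightPair n M k.rev := by
  rw [iotaT_eq_add_upperOnes hM, ← one_smul (ZMod 2) (upperOnes n), heightPair_add_smul,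
    heightPair_transpose_submatrix_rev, heightPair_upperOnes_of_even hn, mul_zero, add_zero]

theorem cast_succ_mul_sum_heightPair_eq_zero {M : Matrix (Fin n) (Fin n) (ZMod 2)}
    (hM : UpperTri n M) (h : InOrbit n M (iotaT n M)) :
    (n + 1 : ZMod 2) * ∑ k, heightPair n M k = 0 := by
  rcases Nat.even_or_odd n with hn | hn
  · have hpalindrome (k : Fin n) : heightPair n M k.rev = heightPair n M k := by
      rw [← heightPair_iotaT_of_even hn hM]
      exact h.apply_eq (f := (heightPair n · k)) fun hstep => hstep.heightPair_eq k
    rw [sum_eq_zero_of_apply_rev hn hpalindrome, mul_zero]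
  · rw [← Nat.cast_add_one, ZMod.natCast_eq_zero_iff_even.2 hn.add_one, zero_mul]

end TransvectionAction

theorem iota_preserves_no_orbit_general (n : ℕ) (h8 : 1 ≤ n % 8 ∧ n % 8 ≤ 4)
    (M : Matrix (Fin n) (Fin n) (ZMod 2)) (hM : UpperTri n M) :
    ¬ InOrbit n M (iotaT n M) := by
  intro h
  have hodd : ((n + 3).choose 4 : ZMod 2) = 1 := by
    rw [ZMod.natCast_eq_one_iff_odd, Nat.odd_iff, choose_four_mod_two]
    omega
  have hinv : hookForm n (iotaT n M) = hookForm n M := h.apply_eq Gstep.hookForm_eq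
  rw [hookForm_iotaT hM, hodd, cast_succ_mul_sum_heightPair_eq_zero hM h, add_zero] at hinv
  exact one_ne_zero (add_eq_left.1 hinv)

theorem iota_preserves_no_orbit (n : ℕ) (hn : 6 ≤ n) (heven : n % 2 = 0)
    (h8 : n % 8 = 2 ∨ n % 8 = 4)
    (M : Matrix (Fin n) (Fin n) (ZMod 2)) (hM : UpperTri n M) :
    ¬ InOrbit n M (iotaT n M) :=
  iota_preserves_no_orbit_general n (by omega) M hM
end
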